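/- Let (X,d) be a geodesic metric space. Suppose that for every Lipschitz curve γ:[0,1]→X with γ(0)=γ(1) and all Lipschitz functions f, π : X → ℝ one has ∫₀¹ (f∘γ)(t)·(π∘γ)'(t) dt = 0, where (π∘γ)' is the almost-everywhere defined derivative of the Lipschitz function π∘γ. Then X is uniquely geodesic: any two constant-speed geodesics c₁, c₂ : [0,1] → X with c₁(0) = c₂(0) and c₁(1) = c₂(1) satisfy c₁(t) = c₂(t) for all t ∈ [0,1]. -/

import Mathlib

/-- A constant-speed geodesic from `x` to `y`, parameterized on `[0,1]`. -/
def IsGeodesicSegment {X : Type*} [MetricSpace X] (c : ℝ → X) (x y : X) : Prop :=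
  c 0 = x ∧ c 1 = y ∧
    ∀ s ∈ Set.Icc (0:ℝ) 1, ∀ t ∈ Set.Icc (0:ℝ) 1,
      dist (c s) (c t) = dist x y * |s - t|

/-- A metric space is geodesic if any two points are joined by a constant-speed geodesic. -/
def IsGeodesicSpace (X : Type*) [MetricSpace X] : Prop :=
  ∀ x y : X, ∃ c : ℝ → X, IsGeodesicSegment c x y

/-!
Integrating `f dp` out along `c₁` and back along `c₂` gives the difference of the two integrals, so
the vanishing of loop integrals makes `∫ f dp` depend only on the endpoints of the curve. For
geodesics from `x` to `y ≠ x` and `p = dist x`, the derivative of `p ∘ cᵢ` is the constant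
`dist x y`, hence `∫ f ∘ c₁ = ∫ f ∘ c₂` for every Lipschitz `f`. Taking for `f` the distance to the
compact image of `c₂` shows that `c₁` stays in that image, and a point of a geodesic is determined
by its distance to `x`.
-/

open Set MeasureTheory

section RoundTrip

variable {X : Type*}

/-- The metric `1`-current `⟦γ⟧(f, p) = ∫ f dp` carried by a curve `γ` on `[0, 1]`. It is meaningful
when `p ∘ γ` is differentiable almost everywhere, for instance if `p` and `γ` are Lipschitz. -/
noncomputable def curveCurrent (γ : ℝ → X) (f p : X → ℝ) : ℝ :=
  ∫ t in (0 : ℝ)..1, f (γ t) * deriv (p ∘ γ) t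

/-- The curve that runs through `c₁` on `[0, 1 / 2]` and through `c₂` backwards on
`[1 / 2, 1]`, both at double speed. For curves on `[0, 1]` with the same endpoints it is a loop. -/
noncomputable def roundTrip (c₁ c₂ : ℝ → X) (t : ℝ) : X :=
  if t ≤ 1 / 2 then c₁ (2 * t) else c₂ (2 - 2 * t)

variable {c₁ c₂ : ℝ → X}

lemma roundTrip_zero : roundTrip c₁ c₂ 0 = c₁ 0 := by
  simp [roundTrip]

lemma roundTrip_one : roundTrip c₁ c₂ 1 = c₂ 0 := by
  norm_num [roundTrip]

lemma roundTrip_of_le {t : ℝ} (ht : t ≤ 1 / 2) : roundTrip c₁ c₂ t = c₁ (2 * t) :=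
  if_pos ht

lemma roundTrip_of_gt {t : ℝ} (ht : 1 / 2 < t) : roundTrip c₁ c₂ t = c₂ (2 - 2 * t) :=
  if_neg ht.not_ge

lemma roundTrip_of_ge (h : c₁ 1 = c₂ 1) {t : ℝ} (ht : 1 / 2 ≤ t) :
    roundTrip c₁ c₂ t = c₂ (2 - 2 * t) := by
  rcases ht.eq_or_lt with rfl | ht
  · norm_num [roundTrip, h]
  · exact roundTrip_of_gt ht

lemma deriv_comp_roundTrip_of_lt (p : X → ℝ) {t : ℝ} (ht : t < 1 / 2) :
    deriv (p ∘ roundTrip c₁ c₂) t = 2 * deriv (p ∘ c₁) (2 * t) := by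
  have near : p ∘ roundTrip c₁ c₂ =ᶠ[nhds t] fun u ↦ (p ∘ c₁) (2 * u) := by
    filter_upwards [Iio_mem_nhds ht] with u hu
    exact congrArg p (roundTrip_of_le (le_of_lt hu))
  rw [near.deriv_eq, deriv_comp_mul_left, smul_eq_mul]

lemma deriv_comp_roundTrip_of_gt (p : X → ℝ) {t : ℝ} (ht : 1 / 2 < t) :
    deriv (p ∘ roundTrip c₁ c₂) t = -(2 * deriv (p ∘ c₂) (2 - 2 * t)) := by
  have near : p ∘ roundTrip c₁ c₂ =ᶠ[nhds t] fun u ↦ (p ∘ c₂) (2 - 2 * u) := by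
    filter_upwards [Ioi_mem_nhds ht] with u hu
    exact congrArg p (roundTrip_of_gt hu)
  rw [near.deriv_eq, deriv_comp_mul_left (c := 2) (f := fun v ↦ (p ∘ c₂) (2 - v)),
    deriv_comp_const_sub, smul_eq_mul, mul_neg]

lemma integral_roundTrip_left (c₁ c₂ : ℝ → X) (f p : X → ℝ) :
    ∫ t in (0 : ℝ)..1 / 2, f (roundTrip c₁ c₂ t) * deriv (p ∘ roundTrip c₁ c₂) t =
      curveCurrent c₁ f p := calc
  _ = ∫ t in (0 : ℝ)..1 / 2, 2 * (f (c₁ (2 * t)) * deriv (p ∘ c₁) (2 * t)) := by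
    refine intervalIntegral.integral_congr_Ioo_of_le (by norm_num) fun t ht ↦ ?_
    simp only [roundTrip_of_le ht.2.le, deriv_comp_roundTrip_of_lt p ht.2]
    ring
  _ = curveCurrent c₁ f p := by
    rw [intervalIntegral.integral_const_mul,
      intervalIntegral.mul_integral_comp_mul_left (f := fun t ↦ f (c₁ t) * deriv (p ∘ c₁) t)]
    norm_num [curveCurrent]

lemma integral_roundTrip_right (c₁ c₂ : ℝ → X) (f p : X → ℝ) :
    ∫ t in (1 / 2 : ℝ)..1, f (roundTrip c₁ c₂ t) * deriv (p ∘ roundTrip c₁ c₂) t =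
      -curveCurrent c₂ f p := calc
  _ = ∫ t in (1 / 2 : ℝ)..1, -2 * (f (c₂ (2 - 2 * t)) * deriv (p ∘ c₂) (2 - 2 * t)) := by
    refine intervalIntegral.integral_congr_Ioo_of_le (by norm_num) fun t ht ↦ ?_
    simp only [roundTrip_of_gt ht.1, deriv_comp_roundTrip_of_gt p ht.1]
    ring
  _ = -curveCurrent c₂ f p := by
    rw [intervalIntegral.integral_const_mul, neg_mul,
      intervalIntegral.mul_integral_comp_sub_mul (f := fun t ↦ f (c₂ t) * deriv (p ∘ c₂) t)]
    norm_num [curveCurrent]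

end RoundTrip

section MetricCurves

variable {X : Type*} [PseudoMetricSpace X]

lemma lipschitzOnWith_union_of_isGreatest_of_isLeast {g : ℝ → X} {K : NNReal} {s t : Set ℝ} {b : ℝ}
    (hs : LipschitzOnWith K g s) (ht : LipschitzOnWith K g t)
    (hsb : IsGreatest s b) (htb : IsLeast t b) : LipschitzOnWith K g (s ∪ t) := by
  have across : ∀ u ∈ s, ∀ v ∈ t, dist (g u) (g v) ≤ K * dist u v := fun u hu v hv ↦ calc
    dist (g u) (g v) ≤ dist (g u) (g b) + dist (g b) (g v) := dist_triangle _ _ _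
    _ ≤ K * dist u b + K * dist b v :=
      add_le_add (hs.dist_le_mul u hu b hsb.1) (ht.dist_le_mul b htb.1 v hv)
    _ = K * dist u v := by
      have hub := hsb.2 hu
      have hbv := htb.2 hv
      rw [Real.dist_eq, Real.dist_eq, Real.dist_eq, abs_of_nonpos (sub_nonpos.2 hub),
        abs_of_nonpos (sub_nonpos.2 hbv), abs_of_nonpos (sub_nonpos.2 (hub.trans hbv))]
      ring
  refine LipschitzOnWith.of_dist_le_mul ?_
  rintro u (hu | hu) v (hv | hv)
  · exact hs.dist_le_mul u hu v hv
  · exact across u hu v hv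
  · rw [dist_comm, dist_comm u]
    exact across v hv u hu
  · exact ht.dist_le_mul u hu v hv

lemma intervalIntegrable_mul_deriv_comp {γ : ℝ → X} {a b : ℝ} {K Kp : NNReal} {f p : X → ℝ}
    (hγ : LipschitzOnWith K γ (uIcc a b)) (hf : Continuous f) (hp : LipschitzWith Kp p) :
    IntervalIntegrable (fun t ↦ f (γ t) * deriv (p ∘ γ) t) volume a b :=
  (hp.comp_lipschitzOnWith hγ).absolutelyContinuousOnInterval.intervalIntegrable_deriv
    |>.continuousOn_mul (hf.comp_continuousOn hγ.continuousOn)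

variable {c₁ c₂ : ℝ → X}

lemma lipschitzOnWith_roundTrip {K : NNReal} (h₁ : LipschitzOnWith K c₁ (Icc 0 1))
    (h₂ : LipschitzOnWith K c₂ (Icc 0 1)) (h : c₁ 1 = c₂ 1) :
    LipschitzOnWith (K * 2) (roundTrip c₁ c₂) (Icc 0 1) := by
  have out : LipschitzOnWith (K * 2) (roundTrip c₁ c₂) (Icc 0 (1 / 2)) := by
    have double : LipschitzWith 2 fun t : ℝ ↦ 2 * t :=
      LipschitzWith.of_dist_le_mul fun s t ↦ by simp [Real.dist_eq, ← mul_sub, abs_mul]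
    have maps : MapsTo (fun t : ℝ ↦ 2 * t) (Icc 0 (1 / 2)) (Icc 0 1) := fun t ht ↦ by
      constructor <;> linarith [ht.1, ht.2]
    intro s hs t ht
    rw [roundTrip_of_le hs.2, roundTrip_of_le ht.2]
    exact h₁.comp double.lipschitzOnWith maps hs ht
  have back : LipschitzOnWith (K * 2) (roundTrip c₁ c₂) (Icc (1 / 2) 1) := by
    have reflect : LipschitzWith 2 fun t : ℝ ↦ 2 - 2 * t :=
      LipschitzWith.of_dist_le_mul fun s t ↦ by
        simp only [dist_sub_left]
        simp [Real.dist_eq, ← mul_sub, abs_mul]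
    have maps : MapsTo (fun t : ℝ ↦ 2 - 2 * t) (Icc (1 / 2) 1) (Icc 0 1) := fun t ht ↦ by
      constructor <;> linarith [ht.1, ht.2]
    intro s hs t ht
    rw [roundTrip_of_ge h hs.1, roundTrip_of_ge h ht.1]
    exact h₂.comp reflect.lipschitzOnWith maps hs ht
  rw [← Icc_union_Icc_eq_Icc (b := (1 / 2 : ℝ)) (by norm_num) (by norm_num)]
  exact lipschitzOnWith_union_of_isGreatest_of_isLeast out back
    (isGreatest_Icc (by norm_num)) (isLeast_Icc (by norm_num))

lemma curveCurrent_roundTrip {K Kp : NNReal} {f p : X → ℝ}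
    (h₁ : LipschitzOnWith K c₁ (Icc 0 1)) (h₂ : LipschitzOnWith K c₂ (Icc 0 1)) (h : c₁ 1 = c₂ 1)
    (hf : Continuous f) (hp : LipschitzWith Kp p) :
    curveCurrent (roundTrip c₁ c₂) f p = curveCurrent c₁ f p - curveCurrent c₂ f p := by
  have hlip := lipschitzOnWith_roundTrip h₁ h₂ h
  have integrable {a b : ℝ} (ha : a ∈ Icc (0 : ℝ) 1) (hb : b ∈ Icc (0 : ℝ) 1) :
      IntervalIntegrable (fun t ↦ f (roundTrip c₁ c₂ t) * deriv (p ∘ roundTrip c₁ c₂) t)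
        volume a b :=
    intervalIntegrable_mul_deriv_comp (hlip.mono (uIcc_subset_Icc ha hb)) hf hp
  rw [sub_eq_add_neg, ← integral_roundTrip_left c₁ c₂, ← integral_roundTrip_right c₁ c₂]
  exact (intervalIntegral.integral_add_adjacent_intervals
    (integrable ⟨le_rfl, zero_le_one⟩ ⟨by norm_num, by norm_num⟩)
    (integrable ⟨by norm_num, by norm_num⟩ ⟨zero_le_one, le_rfl⟩)).symm

lemma curveCurrent_eq_of_forall_loop_eq_zero {K Kp : NNReal} {f p : X → ℝ}
    (hloop : ∀ (γ : ℝ → X) (L : NNReal), LipschitzOnWith L γ (Icc 0 1) → γ 0 = γ 1 →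
      curveCurrent γ f p = 0)
    (hf : Continuous f) (hp : LipschitzWith Kp p)
    (h₁ : LipschitzOnWith K c₁ (Icc 0 1)) (h₂ : LipschitzOnWith K c₂ (Icc 0 1))
    (start : c₁ 0 = c₂ 0) (finish : c₁ 1 = c₂ 1) :
    curveCurrent c₁ f p = curveCurrent c₂ f p := by
  rw [← sub_eq_zero, ← curveCurrent_roundTrip h₁ h₂ finish hf hp]
  exact hloop _ _ (lipschitzOnWith_roundTrip h₁ h₂ finish)
    (by rw [roundTrip_zero, roundTrip_one, start])

end MetricCurves

section Images

variable {X : Type*} [MetricSpace X]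

lemma image_subset_image_of_forall_integral_comp_eq {c₁ c₂ : ℝ → X} {a b : ℝ} (hab : a < b)
    (h₁ : ContinuousOn c₁ (Icc a b)) (h₂ : ContinuousOn c₂ (Icc a b))
    (h : ∀ f : X → ℝ, LipschitzWith 1 f → ∫ t in a..b, f (c₁ t) = ∫ t in a..b, f (c₂ t)) :
    c₁ '' Icc a b ⊆ c₂ '' Icc a b := by
  rintro _ ⟨t, ht, rfl⟩
  by_contra hmem
  set C := c₂ '' Icc a b
  have hC : IsClosed C := (isCompact_Icc.image_of_continuousOn h₂).isClosed
  have hCne : C.Nonempty := (nonempty_Icc.2 hab.le).image c₂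
  have pos : 0 < ∫ s in a..b, Metric.infDist (c₁ s) C :=
    intervalIntegral.integral_pos hab
      ((Metric.continuous_infDist_pt C).comp_continuousOn h₁) (fun _ _ ↦ Metric.infDist_nonneg)
      ⟨t, ht, (hC.notMem_iff_infDist_pos hCne).1 hmem⟩
  have zero : ∫ s in a..b, Metric.infDist (c₂ s) C = 0 := by
    refine intervalIntegral.integral_zero_ae (.of_forall fun s hs ↦ ?_)
    rw [uIoc_of_le hab.le] at hs
    exact Metric.infDist_zero_of_mem (mem_image_of_mem c₂ (Ioc_subset_Icc_self hs))
  exact (pos.trans_eq ((h _ (Metric.lipschitz_infDist_pt C)).trans zero)).false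

end Images

namespace IsGeodesicSegment

variable {X : Type*} [MetricSpace X] {c : ℝ → X} {x y : X}

lemma dist_left (hc : IsGeodesicSegment c x y) {t : ℝ} (ht : t ∈ Icc (0 : ℝ) 1) :
    dist x (c t) = dist x y * t := by
  have := hc.2.2 0 ⟨le_rfl, zero_le_one⟩ t ht
  rwa [hc.1, zero_sub, abs_neg, abs_of_nonneg ht.1] at this

lemma eq_of_self (hc : IsGeodesicSegment c x x) {t : ℝ} (ht : t ∈ Icc (0 : ℝ) 1) : c t = x :=
  (dist_eq_zero.1 (by rw [hc.dist_left ht, dist_self, zero_mul])).symm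

lemma lipschitzOnWith (hc : IsGeodesicSegment c x y) :
    LipschitzOnWith (nndist x y) c (Icc 0 1) :=
  LipschitzOnWith.of_dist_le_mul fun s hs t ht ↦ (hc.2.2 s hs t ht).le

lemma curveCurrent_dist_left (hc : IsGeodesicSegment c x y) (f : X → ℝ) :
    curveCurrent c f (dist x) = dist x y * ∫ t in (0 : ℝ)..1, f (c t) := by
  rw [curveCurrent, ← intervalIntegral.integral_const_mul]
  refine intervalIntegral.integral_congr_Ioo_of_le zero_le_one fun t ht ↦ ?_
  have near : dist x ∘ c =ᶠ[nhds t] fun u ↦ dist x y * u := by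
    filter_upwards [Icc_mem_nhds ht.1 ht.2] with u hu using hc.dist_left hu
  rw [near.deriv_eq, deriv_const_mul_id, mul_comm]

end IsGeodesicSegment

theorem uniquely_geodesic_of_loop_integrals_vanish_general {X : Type*} [MetricSpace X]
    (h : ∀ (γ : ℝ → X) (K : NNReal), LipschitzOnWith K γ (Set.Icc 0 1) → γ 0 = γ 1 →
      ∀ (f p : X → ℝ) (Kf Kp : NNReal), LipschitzWith Kf f → LipschitzWith Kp p →
        ∫ t in (0:ℝ)..1, f (γ t) * deriv (p ∘ γ) t = 0)
    (c₁ c₂ : ℝ → X) (x y : X)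
    (h₁ : IsGeodesicSegment c₁ x y) (h₂ : IsGeodesicSegment c₂ x y) :
    ∀ t ∈ Set.Icc (0:ℝ) 1, c₁ t = c₂ t := by
  intro t ht
  rcases eq_or_ne x y with rfl | hxy
  · rw [h₁.eq_of_self ht, h₂.eq_of_self ht]
  have hD : dist x y ≠ 0 := dist_ne_zero.2 hxy
  have integral_eq (f : X → ℝ) (hf : LipschitzWith 1 f) :
      ∫ t in (0 : ℝ)..1, f (c₁ t) = ∫ t in (0 : ℝ)..1, f (c₂ t) := mul_left_cancel₀ hD <| by
    have hp := LipschitzWith.dist_right x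
    rw [← h₁.curveCurrent_dist_left, ← h₂.curveCurrent_dist_left]
    exact curveCurrent_eq_of_forall_loop_eq_zero
      (fun γ L hγ hloop ↦ h γ L hγ hloop f (dist x) 1 1 hf hp) hf.continuous hp
      h₁.lipschitzOnWith h₂.lipschitzOnWith (h₁.1.trans h₂.1.symm) (h₁.2.1.trans h₂.2.1.symm)
  obtain ⟨s, hs, hst⟩ : c₁ t ∈ c₂ '' Icc 0 1 :=
    image_subset_image_of_forall_integral_comp_eq zero_lt_one h₁.lipschitzOnWith.continuousOn
      h₂.lipschitzOnWith.continuousOn integral_eq (mem_image_of_mem c₁ ht)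
  have same_time : s = t := mul_left_cancel₀ hD <| by
    rw [← h₂.dist_left hs, hst, h₁.dist_left ht]
  rw [← hst, same_time]

theorem uniquely_geodesic_of_loop_integrals_vanish {X : Type*} [MetricSpace X]
    (hgeo : IsGeodesicSpace X)
    (h : ∀ (γ : ℝ → X) (K : NNReal), LipschitzOnWith K γ (Set.Icc 0 1) → γ 0 = γ 1 →
      ∀ (f p : X → ℝ) (Kf Kp : NNReal), LipschitzWith Kf f → LipschitzWith Kp p →
        ∫ t in (0:ℝ)..1, f (γ t) * deriv (p ∘ γ) t = 0)
    (c₁ c₂ : ℝ → X) (x y : X)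
    (h₁ : IsGeodesicSegment c₁ x y) (h₂ : IsGeodesicSegment c₂ x y) :
    ∀ t ∈ Set.Icc (0:ℝ) 1, c₁ t = c₂ t :=
  uniquely_geodesic_of_loop_integrals_vanish_general h c₁ c₂ x y h₁ h₂
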